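/- With E[X_n²] = [x^n] (∂/∂t (t ∂Z/∂t))|_{t=1} where Z(x,t) = 1 + xB_p(x)/(1 - t(A_p(x)-B_p(x))), one has the formal power series identity Σ_{n≥0} E[X_n²] x^n = 2x/((1-x)^3 B_p(x)^2) - 3x/((1-x)^2 B_p(x)) + x/(1-x). -/

import Mathlib

open Finset Filter

noncomputable section

/-- The weight of a path, given as a list of vertices. -/
def pathWeight (wt : ℕ → ℕ → ℕ) (l : List ℕ) : ℕ :=
  ((l.zip l.tail).map fun e => wt e.1 e.2).sum

/-- `l` is a directed path from `a` to `b` in the transitive tournament on `ℕ`. -/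
def IsPath (a b : ℕ) (l : List ℕ) : Prop :=
  l.Chain' (· < ·) ∧ l.head? = some a ∧ l.getLast? = some b

/-- `maxW wt a b` is the maximum weight of a directed path from `a` to `b`. -/
def maxW (wt : ℕ → ℕ → ℕ) (a b : ℕ) : ℕ :=
  sSup {m | ∃ l, IsPath a b l ∧ pathWeight wt l = m}

/-- The edges of the transitive tournament on `n` vertices. -/
abbrev Edge (n : ℕ) := {e : Fin n × Fin n // (e.1 : ℕ) < (e.2 : ℕ)}

/-- The sample space: an assignment of a `0/1` weight (a `Bool`) to each edge. -/
abbrev Omega (n : ℕ) := Edge n → Bool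

/-- The weight function on vertices `1, …, n` induced by an outcome `w`. -/
def wtOf {n : ℕ} (w : Omega n) (a b : ℕ) : ℕ :=
  if h : 1 ≤ a ∧ a < b ∧ b ≤ n then
    (if w ⟨(⟨a - 1, by omega⟩, ⟨b - 1, by omega⟩), by show a - 1 < b - 1; omega⟩
      then 1 else 0)
  else 0

/-- The probability of outcome `w`: each edge independently has weight 1
with probability `p` and weight 0 with probability `1 - p`. -/
def prob (p : ℝ) {n : ℕ} (w : Omega n) : ℝ :=
  ∏ e : Edge n, (if w e then p else 1 - p)

/-- `X n w` : the maximum weight of a directed path from vertex `1` to vertex `n`. -/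
def X (n : ℕ) (w : Omega n) : ℕ := maxW (wtOf w) 1 n

/-- The expectation of `X n` under i.i.d. Bernoulli(p) edge weights. -/
def EX (p : ℝ) (n : ℕ) : ℝ := ∑ w : Omega n, prob p w * (X n w : ℝ)


/-- `A_p(x) = Σ_{n≥0} (1-p)^{C(n,2)} x^n` as a formal power series over `ℝ`. -/
noncomputable def Aps (p : ℝ) : PowerSeries ℝ :=
  PowerSeries.mk fun n => (1 - p) ^ (n.choose 2)

/-- `B_p(x) = Σ_{n≥0} (1-p)^{C(n+1,2)} x^n` as a formal power series over `ℝ`. -/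
noncomputable def Bps (p : ℝ) : PowerSeries ℝ :=
  PowerSeries.mk fun n => (1 - p) ^ ((n + 1).choose 2)

/-- The second moment `E[X_n²]`. -/
def EX2 (p : ℝ) (n : ℕ) : ℝ := ∑ w : Omega n, prob p w * (X n w : ℝ) ^ 2

/-!
Let `L v` be the maximal weight of a path from `1` to `v`. Since weights are `0` or `1`, `L` is
nondecreasing with steps `0` and `1`, and `L (n + 1) = L n + 1` exactly when some edge into `n + 1`
from one of the `m` vertices `u ≤ n` with `L u = L n` has weight `1`. Given the edges among
`1, …, n` this has probability `1 - q ^ m`, where `q = 1 - p`; otherwise `m` becomes `m + 1`. So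
`(L n, m)` is a Markov chain, and a level is occupied by exactly `j` vertices with probability
`q ^ (j choose 2) * (1 - q ^ j)`, which is the coefficient of `x ^ j` in `D = A - B`.

Decomposing at the first vertex of the current level gives, for `M φ = ∑ E[φ (X (n + 1))] x ^ n`,
the renewal equation `M φ = φ 0 * B + D * M (φ (· + 1))`. For `φ k = k choose (j + 1)`, Pascal's
rule turns it into `(1 - D) * M (choose (j + 1)) = D * M (choose j)`, where `1 - D = (1 - x) * B`.
All binomial moments follow, and `k ^ 2 = 2 * (k choose 2) + k`.
-/

section Paths

variable {a b c n : ℕ} {l : List ℕ} {wt wt' : ℕ → ℕ → ℕ}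

theorem isPath_iff :
    IsPath a b l ↔ l.IsChain (· < ·) ∧ l.head? = some a ∧ l.getLast? = some b :=
  Iff.rfl

theorem isPath_singleton : IsPath a b [c] ↔ c = a ∧ c = b := by
  simp [isPath_iff]

theorem isPath_append_singleton (hl : l ≠ []) :
    IsPath a b (l ++ [c]) ↔ c = b ∧ ∃ u < b, IsPath a u l := by
  obtain ⟨v, hv⟩ : ∃ v, l.getLast? = some v := ⟨_, List.getLast?_eq_some_getLast hl⟩
  have hchain : (l ++ [c]).IsChain (· < ·) ↔ l.IsChain (· < ·) ∧ v < c := by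
    simp [List.isChain_append, hv]
  have hhead : (l ++ [c]).head? = l.head? := List.head?_append_of_ne_nil l hl
  have hlast : (l ++ [c]).getLast? = some c := List.getLast?_concat
  simp only [isPath_iff, hchain, hhead, hlast, hv, Option.some.injEq]
  constructor
  · rintro ⟨⟨hl, hvc⟩, ha, rfl⟩
    exact ⟨rfl, v, hvc, hl, ha, rfl⟩
  · rintro ⟨rfl, u, huc, hl, ha, rfl⟩
    exact ⟨⟨hl, huc⟩, ha, rfl⟩

theorem IsPath.le (h : IsPath a b l) : a ≤ b := by
  induction l using List.reverseRecOn generalizing b with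
  | nil => simp [isPath_iff] at h
  | append_singleton l c ih =>
    rcases eq_or_ne l [] with rfl | hl
    · obtain ⟨rfl, rfl⟩ := isPath_singleton.1 h
      exact le_rfl
    · obtain ⟨-, u, hub, hu⟩ := (isPath_append_singleton hl).1 h
      exact (ih hu).trans hub.le

theorem pathWeight_append_singleton (h : l.getLast? = some b) :
    pathWeight wt (l ++ [c]) = pathWeight wt l + wt b c := by
  induction l with
  | nil => simp at h
  | cons d l ih =>
    cases l with
    | nil => simp_all [pathWeight]
    | cons e l =>
      have weight_cons_cons (l : List ℕ) :
          pathWeight wt (d :: e :: l) = wt d e + pathWeight wt (e :: l) := by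
        simp [pathWeight]
      rw [List.getLast?_cons_cons] at h
      rw [List.cons_append, List.cons_append, weight_cons_cons, ← List.cons_append, ih h,
        weight_cons_cons, add_assoc]

/-- The set of weights of directed paths from `a` to `b`, whose supremum is `maxW wt a b`. -/
def pathWeights (wt : ℕ → ℕ → ℕ) (a b : ℕ) : Set ℕ :=
  {m | ∃ l, IsPath a b l ∧ pathWeight wt l = m}

theorem maxW_eq_sSup : maxW wt a b = sSup (pathWeights wt a b) :=
  rfl

theorem pathWeights_eq_empty (h : b < a) : pathWeights wt a b = ∅ := by
  refine Set.eq_empty_of_forall_notMem ?_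
  rintro _ ⟨l, hl, -⟩
  exact h.not_ge hl.le

theorem pathWeights_self : pathWeights wt a a = {0} := by
  ext m
  constructor
  · rintro ⟨l, hl, rfl⟩
    obtain rfl | ⟨l, c, rfl⟩ := List.eq_nil_or_concat l
    · simp [isPath_iff] at hl
    rw [List.concat_eq_append] at hl ⊢
    rcases eq_or_ne l [] with rfl | hne
    · simp [pathWeight]
    · obtain ⟨-, u, hua, hu⟩ := (isPath_append_singleton hne).1 hl
      exact absurd hu.le hua.not_ge
  · rintro rfl
    exact ⟨[a], isPath_singleton.2 ⟨rfl, rfl⟩, by simp [pathWeight]⟩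

theorem pathWeights_of_lt (hab : a < b) :
    pathWeights wt a b = ⋃ u ∈ Ico a b, (· + wt u b) '' pathWeights wt a u := by
  ext m
  simp only [Set.mem_iUnion, Set.mem_image, mem_Ico, exists_prop]
  constructor
  · rintro ⟨l, hl, rfl⟩
    obtain rfl | ⟨l, c, rfl⟩ := List.eq_nil_or_concat l
    · simp [isPath_iff] at hl
    rw [List.concat_eq_append] at hl ⊢
    rcases eq_or_ne l [] with rfl | hne
    · obtain ⟨rfl, rfl⟩ := isPath_singleton.1 hl
      exact absurd hab (lt_irrefl _)
    · obtain ⟨rfl, u, hub, hu⟩ := (isPath_append_singleton hne).1 hl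
      exact ⟨u, ⟨hu.le, hub⟩, _, ⟨l, hu, rfl⟩, (pathWeight_append_singleton hu.2.2).symm⟩
  · rintro ⟨u, ⟨-, hub⟩, _, ⟨l, hl, rfl⟩, rfl⟩
    have hne : l ≠ [] := by
      rintro rfl
      simp [isPath_iff] at hl
    exact ⟨l ++ [b], (isPath_append_singleton hne).2 ⟨rfl, u, hub, hl⟩,
      pathWeight_append_singleton hl.2.2⟩

theorem pathWeights_finite : (pathWeights wt a b).Finite := by
  induction b using Nat.strong_induction_on with
  | _ b ih =>
    rcases lt_trichotomy a b with hab | rfl | hba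
    · rw [pathWeights_of_lt hab]
      exact (Ico a b).finite_toSet.biUnion fun u hu => (ih u (mem_Ico.1 hu).2).image _
    · rw [pathWeights_self]
      exact Set.finite_singleton 0
    · rw [pathWeights_eq_empty hba]
      exact Set.finite_empty

theorem pathWeights_nonempty (hab : a ≤ b) : (pathWeights wt a b).Nonempty := by
  rcases hab.eq_or_lt with rfl | hab
  · exact pathWeights_self ▸ Set.singleton_nonempty 0
  · rw [pathWeights_of_lt hab]
    exact ⟨0 + wt a b, Set.mem_biUnion (mem_Ico.2 ⟨le_rfl, hab⟩)
      (Set.mem_image_of_mem _ (pathWeights_self ▸ Set.mem_singleton 0))⟩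

theorem isGreatest_maxW (hab : a ≤ b) : IsGreatest (pathWeights wt a b) (maxW wt a b) :=
  ⟨Nat.sSup_mem (pathWeights_nonempty hab) pathWeights_finite.bddAbove,
    fun _ hm => le_csSup pathWeights_finite.bddAbove hm⟩

theorem maxW_of_gt (h : b < a) : maxW wt a b = 0 := by
  simp [maxW_eq_sSup, pathWeights_eq_empty h]

theorem maxW_self : maxW wt a a = 0 := by
  simp [maxW_eq_sSup, pathWeights_self]

theorem maxW_of_lt (hab : a < b) :
    maxW wt a b = (Ico a b).sup fun u => maxW wt a u + wt u b := by
  apply le_antisymm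
  · have hmem := (isGreatest_maxW (wt := wt) hab.le).1
    rw [pathWeights_of_lt hab] at hmem
    simp only [Set.mem_iUnion, Set.mem_image, exists_prop] at hmem
    obtain ⟨u, hu, m, hm, hmu⟩ := hmem
    rw [← hmu]
    refine le_trans ?_ (le_sup hu)
    gcongr
    exact (isGreatest_maxW (mem_Ico.1 hu).1).2 hm
  · refine Finset.sup_le fun u hu => (isGreatest_maxW hab.le).2 ?_
    rw [pathWeights_of_lt hab]
    exact Set.mem_biUnion hu
      (Set.mem_image_of_mem _ (isGreatest_maxW (mem_Ico.1 hu).1).1)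

theorem maxW_congr (h : ∀ u v, v ≤ b → wt u v = wt' u v) : maxW wt a b = maxW wt' a b := by
  induction b using Nat.strong_induction_on with
  | _ b ih =>
    rcases lt_trichotomy a b with hab | rfl | hba
    · rw [maxW_of_lt hab, maxW_of_lt hab]
      refine sup_congr rfl fun u hu => ?_
      have hub := (mem_Ico.1 hu).2
      rw [ih u hub fun v z hz => h v z (hz.trans hub.le), h u b le_rfl]
    · rw [maxW_self, maxW_self]
    · rw [maxW_of_gt hba, maxW_of_gt hba]

theorem maxW_add_le (hab : a ≤ b) (hbc : b < c) : maxW wt a b + wt b c ≤ maxW wt a c := by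
  rw [maxW_of_lt (hab.trans_lt hbc)]
  exact le_sup (f := fun u => maxW wt a u + wt u c) (mem_Ico.2 ⟨hab, hbc⟩)

theorem maxW_mono (hab : a ≤ b) (hbc : b ≤ c) : maxW wt a b ≤ maxW wt a c := by
  rcases hbc.eq_or_lt with rfl | hbc
  · rfl
  · exact (Nat.le_add_right _ _).trans (maxW_add_le hab hbc)

/-- The vertices `u` of `[a, n]` at the same level as `n`, i.e. with
`maxW wt a u = maxW wt a n`. -/
def topVertices (wt : ℕ → ℕ → ℕ) (a n : ℕ) : Finset ℕ :=
  {u ∈ Icc a n | maxW wt a u = maxW wt a n}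

/-- Some edge of nonzero weight leads from the current level to the new vertex `n + 1`. For weights
in `{0, 1}` this is the event that the level increases at `n + 1`. -/
def IsJump (wt : ℕ → ℕ → ℕ) (a n : ℕ) : Prop :=
  ∃ u ∈ topVertices wt a n, wt u (n + 1) ≠ 0

theorem mem_topVertices {u : ℕ} :
    u ∈ topVertices wt a n ↔ (a ≤ u ∧ u ≤ n) ∧ maxW wt a u = maxW wt a n := by
  simp [topVertices]

theorem topVertices_subset : topVertices wt a n ⊆ Icc a n :=
  filter_subset _ _

theorem self_mem_topVertices (han : a ≤ n) : n ∈ topVertices wt a n :=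
  mem_topVertices.2 ⟨⟨han, le_rfl⟩, rfl⟩

theorem topVertices_self : topVertices wt a a = {a} := by
  ext u
  rw [mem_topVertices, mem_singleton]
  grind

theorem topVertices_congr (h : ∀ u v, v ≤ n → wt u v = wt' u v) :
    topVertices wt a n = topVertices wt' a n := by
  refine filter_congr fun u hu => ?_
  have hun := (mem_Icc.1 hu).2
  rw [maxW_congr h, maxW_congr fun v z hz => h v z (hz.trans hun)]

theorem maxW_succ_of_isJump (hwt : ∀ u v, wt u v ≤ 1) (han : a ≤ n) (hjump : IsJump wt a n) :
    maxW wt a (n + 1) = maxW wt a n + 1 := by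
  apply le_antisymm
  · rw [maxW_of_lt (Nat.lt_succ_of_le han)]
    refine Finset.sup_le fun u hu => ?_
    obtain ⟨hau, hun⟩ := mem_Ico.1 hu
    exact add_le_add (maxW_mono hau (Nat.le_of_lt_succ hun)) (hwt u (n + 1))
  · obtain ⟨u, hu, hne⟩ := hjump
    obtain ⟨⟨hau, hun⟩, hlevel⟩ := mem_topVertices.1 hu
    calc maxW wt a n + 1 ≤ maxW wt a u + wt u (n + 1) := by rw [hlevel]; gcongr; lia
      _ ≤ maxW wt a (n + 1) := maxW_add_le hau (Nat.lt_succ_of_le hun)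

theorem maxW_succ_of_not_isJump (hwt : ∀ u v, wt u v ≤ 1) (han : a ≤ n)
    (hjump : ¬ IsJump wt a n) : maxW wt a (n + 1) = maxW wt a n := by
  refine le_antisymm ?_ (maxW_mono han n.le_succ)
  rw [maxW_of_lt (Nat.lt_succ_of_le han)]
  refine Finset.sup_le fun u hu => ?_
  obtain ⟨hau, hun⟩ := mem_Ico.1 hu
  have hun := Nat.le_of_lt_succ hun
  by_cases hlevel : maxW wt a u = maxW wt a n
  · have hzero : wt u (n + 1) = 0 := by
      by_contra hne
      exact hjump ⟨u, mem_topVertices.2 ⟨⟨hau, hun⟩, hlevel⟩, hne⟩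
    rw [hzero, add_zero, hlevel]
  · have hlt := (maxW_mono hau hun).lt_of_ne hlevel
    have hle := hwt u (n + 1)
    lia

theorem topVertices_succ_of_isJump (hwt : ∀ u v, wt u v ≤ 1) (han : a ≤ n)
    (hjump : IsJump wt a n) : topVertices wt a (n + 1) = {n + 1} := by
  ext u
  rw [mem_topVertices, mem_singleton, maxW_succ_of_isJump hwt han hjump]
  constructor
  · rintro ⟨⟨hau, hun⟩, hlevel⟩
    by_contra hne
    have := maxW_mono (wt := wt) hau (show u ≤ n by lia)
    lia
  · rintro rfl
    exact ⟨⟨by lia, le_rfl⟩, maxW_succ_of_isJump hwt han hjump⟩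

theorem topVertices_succ_of_not_isJump (hwt : ∀ u v, wt u v ≤ 1) (han : a ≤ n)
    (hjump : ¬ IsJump wt a n) :
    topVertices wt a (n + 1) = insert (n + 1) (topVertices wt a n) := by
  have hlevel := maxW_succ_of_not_isJump hwt han hjump
  ext u
  rw [mem_insert, mem_topVertices, mem_topVertices, hlevel]
  grind

theorem card_topVertices_succ_of_not_isJump (hwt : ∀ u v, wt u v ≤ 1) (han : a ≤ n)
    (hjump : ¬ IsJump wt a n) : #(topVertices wt a (n + 1)) = #(topVertices wt a n) + 1 := by
  rw [topVertices_succ_of_not_isJump hwt han hjump, card_insert_of_notMem]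
  intro hmem
  exact absurd (mem_Icc.1 (topVertices_subset hmem)).2 (Nat.not_succ_le_self n)

end Paths

section Bernoulli

variable {R ι κ : Type*} [CommRing R] [Fintype ι] [DecidableEq ι] [Fintype κ] [DecidableEq κ]

/-- The expectation of `f` over independent bits `v i`, each `true` with probability `p`. As an
algebraic expression it makes sense for `p` in any commutative ring. -/
def bernoulliExpect (p : R) (f : (ι → Bool) → R) : R :=
  ∑ v, (∏ i, if v i then p else 1 - p) * f v

variable (p : R)

theorem bernoulliExpect_add (f g : (ι → Bool) → R) :
    bernoulliExpect p (fun v => f v + g v) = bernoulliExpect p f + bernoulliExpect p g := by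
  simp only [bernoulliExpect, mul_add, sum_add_distrib]

theorem bernoulliExpect_const_mul (c : R) (f : (ι → Bool) → R) :
    bernoulliExpect p (fun v => c * f v) = c * bernoulliExpect p f := by
  simp only [bernoulliExpect, mul_sum, mul_left_comm]

theorem bernoulliExpect_prod (g : ι → Bool → R) :
    bernoulliExpect p (fun v => ∏ i, g i (v i)) =
      ∏ i, (p * g i true + (1 - p) * g i false) := by
  calc bernoulliExpect p (fun v => ∏ i, g i (v i))
      = ∑ v : ι → Bool, ∏ i, (if v i then p else 1 - p) * g i (v i) := by
        simp only [bernoulliExpect, prod_mul_distrib]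
    _ = ∏ i, ∑ c : Bool, (if c then p else 1 - p) * g i c := by
        rw [Fintype.prod_sum]
    _ = ∏ i, (p * g i true + (1 - p) * g i false) := by simp

theorem bernoulliExpect_const (c : R) : bernoulliExpect p (fun _ : ι → Bool => c) = c := by
  have hone : bernoulliExpect p (fun _ : ι → Bool => 1) = 1 := by
    simpa using bernoulliExpect_prod p fun (_ : ι) _ => 1
  simpa [hone] using bernoulliExpect_const_mul p c fun _ : ι → Bool => 1

theorem bernoulliExpect_ite_exists_mem (s : Finset ι)
    [DecidablePred fun v : ι → Bool => ∃ i ∈ s, v i = true] (x y : R) :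
    bernoulliExpect p (fun v => if ∃ i ∈ s, v i = true then x else y) =
      (1 - (1 - p) ^ #s) * x + (1 - p) ^ #s * y := by
  have prob_all_false :
      bernoulliExpect p (fun v => ∏ i, if i ∈ s ∧ v i = true then 0 else 1) = (1 - p) ^ #s := by
    rw [bernoulliExpect_prod p fun i c => if i ∈ s ∧ c = true then 0 else 1, ← prod_const,
      ← Fintype.prod_ite_mem s fun _ => 1 - p]
    refine prod_congr rfl fun i _ => ?_
    by_cases hi : i ∈ s <;> simp [hi]
  have ite_eq (v : ι → Bool) : (if ∃ i ∈ s, v i = true then x else y) =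
      x + (y - x) * ∏ i, if i ∈ s ∧ v i = true then 0 else 1 := by
    split_ifs with h
    · obtain ⟨i, hi⟩ := h
      have hprod : ∏ j, (if j ∈ s ∧ v j = true then 0 else 1 : R) = 0 :=
        prod_eq_zero (mem_univ i) (if_pos hi)
      rw [hprod, mul_zero, add_zero]
    · rw [prod_eq_one fun i _ => if_neg fun hi => h ⟨i, hi⟩, mul_one, add_sub_cancel]
  simp only [ite_eq]
  rw [bernoulliExpect_add, bernoulliExpect_const, bernoulliExpect_const_mul, prob_all_false]
  ring

theorem bernoulliExpect_comp_equiv (e : ι ≃ κ) (f : (ι → Bool) → R) :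
    bernoulliExpect p (fun v : κ → Bool => f (v ∘ e)) = bernoulliExpect p f := by
  refine Fintype.sum_equiv (e.arrowCongr (Equiv.refl Bool)).symm _ _ fun v => ?_
  congr 1
  exact (e.prod_comp fun j => if v j then p else 1 - p).symm

theorem bernoulliExpect_sum_type (f : (ι → Bool) → (κ → Bool) → R) :
    bernoulliExpect p (fun v : ι ⊕ κ → Bool => f (v ∘ Sum.inl) (v ∘ Sum.inr)) =
      bernoulliExpect p fun v => bernoulliExpect p (f v) := by
  simp only [bernoulliExpect, mul_sum, ← Fintype.sum_prod_type', ← mul_assoc]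
  refine Fintype.sum_equiv (Equiv.sumArrowEquivProdArrow ι κ Bool) _ _ fun v => ?_
  rw [Fintype.prod_sum_type]
  rfl

end Bernoulli

section Tournament

variable {n : ℕ}

theorem EX2_eq_bernoulliExpect (p : ℝ) (n : ℕ) :
    EX2 p n = bernoulliExpect p fun w : Omega n => (X n w : ℝ) ^ 2 :=
  rfl

theorem wtOf_le_one (w : Omega n) (a b : ℕ) : wtOf w a b ≤ 1 := by
  unfold wtOf
  split_ifs <;> simp

/-- The edges on `n + 1` vertices are the edges on the first `n` vertices and the `n` edges into
the last vertex. -/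
def edgeSuccEquiv (n : ℕ) : Edge n ⊕ Fin n ≃ Edge (n + 1) where
  toFun := Sum.elim (fun e => ⟨(e.1.1.castSucc, e.1.2.castSucc), e.2⟩)
    (fun i => ⟨(i.castSucc, Fin.last n), i.2⟩)
  invFun e :=
    if h : (e.1.2 : ℕ) < n then .inl ⟨(⟨e.1.1, e.2.trans h⟩, ⟨e.1.2, h⟩), e.2⟩
    else .inr ⟨e.1.1, by have := e.2; lia⟩
  left_inv := by rintro (_ | _) <;> simp
  right_inv := by
    rintro ⟨⟨a, b⟩, hab⟩
    induction b using Fin.lastCases <;> simp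

/-- The weights of the edges among the first `n` of `n + 1` vertices. -/
def initEdges (w : Omega (n + 1)) : Omega n :=
  (w ∘ edgeSuccEquiv n) ∘ Sum.inl

/-- The weights of the edges into the last of `n + 1` vertices. -/
def lastEdges (w : Omega (n + 1)) : Fin n → Bool :=
  (w ∘ edgeSuccEquiv n) ∘ Sum.inr

theorem bernoulliExpect_initEdges_lastEdges {R : Type*} [CommRing R] (p : R)
    (f : Omega n → (Fin n → Bool) → R) :
    bernoulliExpect p (fun w => f (initEdges w) (lastEdges w)) =
      bernoulliExpect p fun w => bernoulliExpect p (f w) :=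
  (bernoulliExpect_comp_equiv p (edgeSuccEquiv n) fun v => f (v ∘ Sum.inl) (v ∘ Sum.inr)).trans
    (bernoulliExpect_sum_type p f)

theorem wtOf_initEdges (w : Omega (n + 1)) {a b : ℕ} (hb : b ≤ n) :
    wtOf (initEdges w) a b = wtOf w a b := by
  unfold wtOf
  by_cases h : 1 ≤ a ∧ a < b
  · rw [dif_pos ⟨h.1, h.2, hb⟩, dif_pos ⟨h.1, h.2, hb.trans n.le_succ⟩]
    rfl
  · rw [dif_neg (by tauto), dif_neg (by tauto)]

theorem wtOf_succ_last (w : Omega (n + 1)) (i : Fin n) :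
    wtOf w (i + 1) (n + 1) = if lastEdges w i then 1 else 0 := by
  unfold wtOf
  rw [dif_pos ⟨by lia, by lia, le_rfl⟩]
  rfl

/-- The number of vertices at the same level as the last vertex `n`. -/
def topCount (n : ℕ) (w : Omega n) : ℕ :=
  #(topVertices (wtOf w) 1 n)

theorem X_zero (w : Omega 0) : X 0 w = 0 :=
  maxW_of_gt Nat.zero_lt_one

theorem X_one (w : Omega 1) : X 1 w = 0 :=
  maxW_self

theorem topCount_one (w : Omega 1) : topCount 1 w = 1 := by
  rw [topCount, topVertices_self, card_singleton]

theorem topCount_pos (hn : 1 ≤ n) (w : Omega n) : 0 < topCount n w :=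
  card_pos.2 ⟨n, self_mem_topVertices hn⟩

/-- `topVertices (wtOf w) 1 n`, with vertex `i + 1` encoded as `i : Fin n`. -/
def topIndices (w : Omega n) : Finset (Fin n) :=
  {i | (i : ℕ) + 1 ∈ topVertices (wtOf w) 1 n}

theorem card_topIndices (w : Omega n) : #(topIndices w) = topCount n w := by
  refine card_nbij (fun i => (i : ℕ) + 1) (by simp [topIndices, Set.MapsTo]) ?_ ?_
  · intro i _ j _ hij
    exact Fin.ext (Nat.succ_injective hij)
  · intro u hu
    obtain ⟨h1, hn⟩ := mem_Icc.1 (topVertices_subset hu)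
    exact ⟨⟨u - 1, by lia⟩, by simpa [topIndices, Nat.sub_add_cancel h1] using hu,
      Nat.sub_add_cancel h1⟩

theorem isJump_iff_exists_lastEdges (w : Omega (n + 1)) :
    IsJump (wtOf w) 1 n ↔ ∃ i ∈ topIndices (initEdges w), lastEdges w i = true := by
  have htop : topVertices (wtOf (initEdges w)) 1 n = topVertices (wtOf w) 1 n :=
    topVertices_congr fun _ _ hv => wtOf_initEdges w hv
  simp only [IsJump, topIndices, mem_filter_univ, htop]
  constructor
  · rintro ⟨u, hu, hne⟩
    obtain ⟨h1, hn⟩ := mem_Icc.1 (topVertices_subset hu)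
    obtain ⟨i, rfl⟩ : ∃ i : Fin n, (i : ℕ) + 1 = u := ⟨⟨u - 1, by lia⟩, Nat.sub_add_cancel h1⟩
    exact ⟨i, hu, by simpa [wtOf_succ_last] using hne⟩
  · rintro ⟨i, hi, hw⟩
    exact ⟨i + 1, hi, by simp [wtOf_succ_last, hw]⟩

theorem apply_X_topCount_succ {α : Type*} (hn : 1 ≤ n) (w : Omega (n + 1)) (f : ℕ → ℕ → α) :
    f (X (n + 1) w) (topCount (n + 1) w) =
      if ∃ i ∈ topIndices (initEdges w), lastEdges w i = true
      then f (X n (initEdges w) + 1) 1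
      else f (X n (initEdges w)) (topCount n (initEdges w) + 1) := by
  have hwt := wtOf_le_one w
  have hX : X n (initEdges w) = maxW (wtOf w) 1 n :=
    maxW_congr fun _ _ hv => wtOf_initEdges w hv
  have htop : topCount n (initEdges w) = #(topVertices (wtOf w) 1 n) :=
    congrArg card (topVertices_congr fun _ _ hv => wtOf_initEdges w hv)
  rw [hX, htop, X, topCount]
  split_ifs with hjump <;> rw [← isJump_iff_exists_lastEdges] at hjump
  · rw [maxW_succ_of_isJump hwt hn hjump, topVertices_succ_of_isJump hwt hn hjump, card_singleton]
  · rw [maxW_succ_of_not_isJump hwt hn hjump, card_topVertices_succ_of_not_isJump hwt hn hjump]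

end Tournament

section Renewal

variable {R : Type*} [CommRing R]

/-- The expectation of `f (X n) (topCount n)`, a function of the state of the Markov chain. -/
def stateExpect (p : R) (n : ℕ) (f : ℕ → ℕ → R) : R :=
  bernoulliExpect p fun w : Omega n => f (X n w) (topCount n w)

variable (p : R)

theorem stateExpect_one (f : ℕ → ℕ → R) : stateExpect p 1 f = f 0 1 := by
  simp only [stateExpect, X_one, topCount_one, bernoulliExpect_const]

theorem stateExpect_succ {n : ℕ} (hn : 1 ≤ n) (f : ℕ → ℕ → R) :
    stateExpect p (n + 1) f = stateExpect p n fun k m =>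
      (1 - (1 - p) ^ m) * f (k + 1) 1 + (1 - p) ^ m * f k (m + 1) := by
  simp only [stateExpect, apply_X_topCount_succ hn]
  rw [bernoulliExpect_initEdges_lastEdges p fun w v =>
    if ∃ i ∈ topIndices w, v i = true then f (X n w + 1) 1 else f (X n w) (topCount n w + 1)]
  simp only [bernoulliExpect_ite_exists_mem, card_topIndices]

/-- `E[φ (X (n + 1)); n + 1 is the first vertex of its level]`. The shift by one makes the index
the exponent of `x` in the generating function. -/
def renewalWeight (φ : ℕ → R) (n : ℕ) : R :=
  stateExpect p (n + 1) fun k m => if m = 1 then φ k else 0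

theorem renewalWeight_zero (φ : ℕ → R) : renewalWeight p φ 0 = φ 0 := by
  simp [renewalWeight, stateExpect_one]

theorem renewalWeight_succ (φ : ℕ → R) (n : ℕ) :
    renewalWeight p φ (n + 1) =
      stateExpect p (n + 1) fun k m => φ (k + 1) * (1 - (1 - p) ^ m) := by
  rw [renewalWeight, stateExpect_succ p n.succ_pos]
  refine congrArg (bernoulliExpect p) (funext fun w => ?_)
  have hpos := topCount_pos n.succ_pos w
  simp [hpos.ne', mul_comm]

/-- A newly opened level survives the next `j` vertices with probability
`q * q ^ 2 * ⋯ * q ^ j`. -/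
theorem stateExpect_mul_eq_sum_antidiagonal (φ h : ℕ → R) (n : ℕ) :
    stateExpect p (n + 1) (fun k m => φ k * h m) =
      ∑ ij ∈ antidiagonal n,
        renewalWeight p φ ij.1 * ((1 - p) ^ (ij.2 + 1).choose 2 * h (ij.2 + 1)) := by
  induction n generalizing h with
  | zero => simp [stateExpect_one, renewalWeight_zero]
  | succ n ih =>
    calc stateExpect p (n + 1 + 1) (fun k m => φ k * h m)
        = h 1 * stateExpect p (n + 1) (fun k m => φ (k + 1) * (1 - (1 - p) ^ m)) +
            stateExpect p (n + 1) (fun k m => φ k * ((1 - p) ^ m * h (m + 1))) := by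
          rw [stateExpect_succ p n.succ_pos]
          simp only [stateExpect, ← bernoulliExpect_const_mul, ← bernoulliExpect_add]
          refine congrArg (bernoulliExpect p) (funext fun w => ?_)
          ring
      _ = _ := by
          rw [← renewalWeight_succ, ih fun m => (1 - p) ^ m * h (m + 1),
            Nat.sum_antidiagonal_succ']
          simp only [Nat.choose_succ_succ' (_ + 1) 1, Nat.choose_one_right, pow_add]
          congr 1
          · simp [mul_comm]
          · exact sum_congr rfl fun _ _ => by ring

end Renewal

section GeneratingFunctions

variable (p : ℝ)

theorem Aps_eq_one_add_X_mul_Bps : Aps p = 1 + PowerSeries.X * Bps p := by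
  ext n
  cases n <;> simp [Aps, Bps, PowerSeries.coeff_succ_X_mul, PowerSeries.coeff_one]

theorem one_sub_Aps_sub_Bps : 1 - (Aps p - Bps p) = (1 - PowerSeries.X) * Bps p := by
  rw [Aps_eq_one_add_X_mul_Bps]
  ring

theorem Aps_sub_Bps_eq_X_mul : Aps p - Bps p = PowerSeries.X *
    PowerSeries.mk fun j => (1 - p) ^ (j + 1).choose 2 * (1 - (1 - p) ^ (j + 1)) := by
  ext n
  cases n with
  | zero => simp [Aps, Bps]
  | succ n =>
    simp only [Aps, Bps, PowerSeries.coeff_succ_X_mul, map_sub, PowerSeries.coeff_mk,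
      Nat.choose_succ_succ' (n + 1) 1, Nat.choose_one_right, pow_add]
    ring

/-- `∑ E[φ (X (n + 1))] x ^ n`; the shift drops the empty tournament. -/
def momentSeries (φ : ℕ → ℝ) : PowerSeries ℝ :=
  PowerSeries.mk fun n => bernoulliExpect p fun w : Omega (n + 1) => φ (X (n + 1) w)

theorem momentSeries_add (φ ψ : ℕ → ℝ) :
    momentSeries p (fun k => φ k + ψ k) = momentSeries p φ + momentSeries p ψ := by
  ext n
  simp only [momentSeries, PowerSeries.coeff_mk, map_add, bernoulliExpect_add]

theorem momentSeries_const_mul (c : ℝ) (φ : ℕ → ℝ) :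
    momentSeries p (fun k => c * φ k) = PowerSeries.C c * momentSeries p φ := by
  ext n
  simp only [momentSeries, PowerSeries.coeff_mk, PowerSeries.coeff_C_mul,
    bernoulliExpect_const_mul]

theorem momentSeries_one : momentSeries p (fun _ => 1) = (1 - PowerSeries.X)⁻¹ := by
  rw [PowerSeries.eq_inv_iff_mul_eq_one (by simp)]
  simp only [momentSeries, bernoulliExpect_const]
  exact PowerSeries.mk_one_mul_one_sub_eq_one ℝ

theorem momentSeries_eq_mk_renewalWeight_mul_Bps (φ : ℕ → ℝ) :
    momentSeries p φ = PowerSeries.mk (renewalWeight p φ) * Bps p := by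
  ext n
  simpa [PowerSeries.coeff_mul, momentSeries, Bps, stateExpect] using
    stateExpect_mul_eq_sum_antidiagonal p φ (fun _ => 1) n

theorem mk_renewalWeight_eq (φ : ℕ → ℝ) :
    PowerSeries.mk (renewalWeight p φ) = PowerSeries.C (φ 0) +
      PowerSeries.mk (renewalWeight p fun k => φ (k + 1)) * (Aps p - Bps p) := by
  rw [Aps_sub_Bps_eq_X_mul, mul_left_comm]
  ext n
  cases n with
  | zero => simp [renewalWeight_zero]
  | succ n =>
    rw [map_add, PowerSeries.coeff_succ_X_mul, PowerSeries.coeff_mul, PowerSeries.coeff_mk,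
      renewalWeight_succ, stateExpect_mul_eq_sum_antidiagonal p (fun k => φ (k + 1))]
    simp

theorem momentSeries_renewal (φ : ℕ → ℝ) :
    momentSeries p φ =
      PowerSeries.C (φ 0) * Bps p + (Aps p - Bps p) * momentSeries p fun k => φ (k + 1) := by
  simp only [momentSeries_eq_mk_renewalWeight_mul_Bps]
  rw [mk_renewalWeight_eq]
  ring

theorem one_sub_X_mul_Bps_mul_inv :
    (1 - PowerSeries.X) * Bps p * ((1 - PowerSeries.X) * Bps p)⁻¹ = 1 :=
  PowerSeries.mul_inv_cancel _ (by simp [Bps])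

theorem momentSeries_choose_succ (j : ℕ) :
    momentSeries p (fun k => (k.choose (j + 1) : ℝ)) =
      (((1 - PowerSeries.X) * Bps p)⁻¹ - 1) * momentSeries p fun k => (k.choose j : ℝ) := by
  have hpascal : momentSeries p (fun k => (k.choose (j + 1) : ℝ)) = (Aps p - Bps p) *
      (momentSeries p (fun k => (k.choose j : ℝ)) +
        momentSeries p fun k => (k.choose (j + 1) : ℝ)) := by
    conv_lhs => rw [momentSeries_renewal]
    simp [Nat.choose_succ_succ', momentSeries_add]
  have hinv := one_sub_X_mul_Bps_mul_inv p
  rw [← one_sub_Aps_sub_Bps] at hinv ⊢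
  generalize (1 - (Aps p - Bps p))⁻¹ = y at hinv ⊢
  linear_combination y * hpascal -
    (momentSeries p (fun k => (k.choose j : ℝ)) +
      momentSeries p fun k => (k.choose (j + 1) : ℝ)) * hinv

theorem momentSeries_choose (j : ℕ) :
    momentSeries p (fun k => (k.choose j : ℝ)) =
      (((1 - PowerSeries.X) * Bps p)⁻¹ - 1) ^ j * (1 - PowerSeries.X)⁻¹ := by
  induction j with
  | zero => simpa using momentSeries_one p
  | succ j ih => rw [momentSeries_choose_succ, ih, pow_succ', mul_assoc]

theorem momentSeries_sq :
    momentSeries p (fun k => (k : ℝ) ^ 2) =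
      2 * momentSeries p (fun k => (k.choose 2 : ℝ)) +
        momentSeries p fun k => (k.choose 1 : ℝ) := by
  have hC : (PowerSeries.C (2 : ℝ)) = 2 := map_ofNat _ 2
  rw [← hC, ← momentSeries_const_mul, ← momentSeries_add]
  congr 1 with k
  rw [Nat.cast_choose_two, Nat.choose_one_right]
  ring

theorem mk_EX2_eq_X_mul_momentSeries :
    PowerSeries.mk (fun n => EX2 p n) =
      PowerSeries.X * momentSeries p fun k => (k : ℝ) ^ 2 := by
  ext n
  cases n with
  | zero => simp [EX2_eq_bernoulliExpect, X_zero, bernoulliExpect_const]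
  | succ n =>
    rw [PowerSeries.coeff_succ_X_mul, PowerSeries.coeff_mk, momentSeries, PowerSeries.coeff_mk,
      EX2_eq_bernoulliExpect]

end GeneratingFunctions

theorem stmt17_general (p : ℝ) :
    PowerSeries.mk (fun n => EX2 p n) =
      2 * PowerSeries.X * ((1 - PowerSeries.X) ^ 3 * (Bps p) ^ 2)⁻¹ -
        3 * PowerSeries.X * ((1 - PowerSeries.X) ^ 2 * Bps p)⁻¹ +
        PowerSeries.X * (1 - PowerSeries.X)⁻¹ := by
  rw [mk_EX2_eq_X_mul_momentSeries, momentSeries_sq, momentSeries_choose, momentSeries_choose]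
  simp only [pow_succ, pow_zero, one_mul, PowerSeries.mul_inv_rev]
  ring

/-- the generating function of the second moments,
`Σ E[X_n²] x^n = 2x/((1-x)³ B_p²) - 3x/((1-x)² B_p) + x/(1-x)`. -/
theorem stmt17 (p : ℝ) (hp : p ∈ Set.Ioo (0 : ℝ) 1) :
    PowerSeries.mk (fun n => EX2 p n) =
      2 * PowerSeries.X * ((1 - PowerSeries.X) ^ 3 * (Bps p) ^ 2)⁻¹ -
        3 * PowerSeries.X * ((1 - PowerSeries.X) ^ 2 * Bps p)⁻¹ +
        PowerSeries.X * (1 - PowerSeries.X)⁻¹ := by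
  exact stmt17_general p

end
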